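/- arXiv:2102.08720 — 3 statements merged into one kernel-verified Lean document; each statement's English description precedes it below -/
import Mathlib

section
/- Let R be a commutative ring, M a module over R, and p a natural number. Let η₁,…,η_p : M →ₗ[R] R be linear functionals, B₁,…,B_p : M →ₗ[R] M be endomorphisms, and v₁,…,v_p ∈ M. Then ∑_{σ ∈ Sym(p)} det( (η_i (B_{σ(j)} v_j))_{i,j} ) = ∑_{σ ∈ Sym(p)} det( (η_i (B_{σ(i)} v_j))_{i,j} ), where the determinants are of the p×p matrices indexed by i,j ∈ {1,…,p}. -/
section SumPermDet

variable {n R : Type*} [Fintype n] [DecidableEq n] [CommRing R]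

open Equiv (Perm)

theorem sum_perm_det_col_eq_sum_sign_smul_permanent (a : n → n → n → R) :
    ∑ σ : Perm n, Matrix.det (Matrix.of fun i j => a i (σ j) j)
      = ∑ τ : Perm n, Perm.sign τ • Matrix.permanent (Matrix.of fun k j => a (τ j) k j) := by
  simp only [Matrix.det_apply, Matrix.permanent, Matrix.of_apply, Finset.smul_sum]
  exact Finset.sum_comm

theorem sum_perm_det_row_eq_sum_sign_smul_permanent (a : n → n → n → R) :
    ∑ σ : Perm n, Matrix.det (Matrix.of fun i j => a i (σ i) j)
      = ∑ τ : Perm n, Perm.sign τ • Matrix.permanent (Matrix.of fun k j => a (τ j) k j) := by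
  have sum_perm_prod_mul_right (τ : Perm n) :
      ∑ σ : Perm n, ∏ j, a (τ j) ((σ * τ) j) j = ∑ σ : Perm n, ∏ j, a (τ j) (σ j) j :=
    Equiv.sum_comp (Equiv.mulRight τ) fun σ => ∏ j, a (τ j) (σ j) j
  calc
    ∑ σ : Perm n, Matrix.det (Matrix.of fun i j => a i (σ i) j)
      = ∑ σ : Perm n, ∑ τ : Perm n, Perm.sign τ • ∏ j, a (τ j) ((σ * τ) j) j := by
        simp only [Matrix.det_apply, Matrix.of_apply, Perm.mul_apply]
    _ = ∑ τ : Perm n, Perm.sign τ • ∑ σ : Perm n, ∏ j, a (τ j) ((σ * τ) j) j := by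
        simp only [Finset.smul_sum]
        exact Finset.sum_comm
    _ = ∑ τ : Perm n, Perm.sign τ • Matrix.permanent (Matrix.of fun k j => a (τ j) k j) := by
        simp only [sum_perm_prod_mul_right, Matrix.permanent, Matrix.of_apply]

theorem alternating_operator_identity_general (a : n → n → n → R) :
    ∑ σ : Perm n, Matrix.det (Matrix.of fun i j => a i (σ j) j)
      = ∑ σ : Perm n, Matrix.det (Matrix.of fun i j => a i (σ i) j) :=
  (sum_perm_det_col_eq_sum_sign_smul_permanent a).trans
    (sum_perm_det_row_eq_sum_sign_smul_permanent a).symm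

end SumPermDet

/-- The alternating operator identity: for linear functionals `η i`, endomorphisms `B i`
and vectors `v i`, summing over all permutations the determinant of the matrix
`(η i (B (σ j) (v j)))` equals the sum over all permutations of the determinant of
`(η i (B (σ i) (v j)))`. -/
theorem alternating_operator_identity
    (R : Type*) [CommRing R] (M : Type*) [AddCommGroup M] [Module R M]
    (p : ℕ) (η : Fin p → (M →ₗ[R] R)) (B : Fin p → (M →ₗ[R] M)) (v : Fin p → M) :
    ∑ σ : Equiv.Perm (Fin p),
        Matrix.det (Matrix.of fun i j => η i (B (σ j) (v j)))
      = ∑ σ : Equiv.Perm (Fin p),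
        Matrix.det (Matrix.of fun i j => η i (B (σ i) (v j))) :=
  alternating_operator_identity_general fun i k j => η i (B k (v j))
end

section
/- Let E be a real normed vector space with dim E ≥ 2, let U ⊆ E be an open connected set, let P : E → E be twice continuously differentiable on U, and let f : E → ℝ be a function such that for every x ∈ U the Fréchet derivative of P at x equals f(x) • id_E. Then there exist a constant c ∈ ℝ and a vector b ∈ E such that f(x) = c and P(x) = c • x + b for every x ∈ U. -/
/-!
Given nearby points `x` and `y`, dimension at least two provides a continuous functional `g ≠ 0`
with `g (y - x) = 0`. The derivative of `g ∘ P` at `z` is `f z • g`, which kills `y - x`, so `g ∘ P`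
is invariant under translation by `y - x`. Comparing its derivatives at `x` and at `y` gives
`f x • g = f y • g`. Hence `f` is locally constant, and `P` has the same derivative as `c • ·`.
-/

open Topology

theorem exists_strongDual_ne_zero_apply_eq_zero {𝕜 E : Type*} [Field 𝕜] [TopologicalSpace 𝕜]
    [IsTopologicalRing 𝕜] [AddCommGroup E] [TopologicalSpace E]
    [Module 𝕜 E] [SeparatingDual 𝕜 E] (hE : 1 < Module.rank 𝕜 E) (w : E) :
    ∃ g : StrongDual 𝕜 E, g ≠ 0 ∧ g w = 0 := by
  rcases eq_or_ne w 0 with rfl | hw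
  · have : Nontrivial E := rank_pos_iff_nontrivial.1 (zero_lt_one.trans hE)
    obtain ⟨v, hv⟩ := exists_ne (0 : E)
    obtain ⟨g, hgv⟩ := SeparatingDual.exists_ne_zero (R := 𝕜) hv
    exact ⟨g, fun hg ↦ hgv (by simp [hg]), map_zero g⟩
  · obtain ⟨v, hwv⟩ := exists_linearIndependent_pair_of_one_lt_rank hE hw
    obtain ⟨p, hpw⟩ := SeparatingDual.exists_eq_one (R := 𝕜) hw
    have hu : v - p v • w ≠ 0 := fun h ↦
      (LinearIndependent.pair_iff' hw).1 hwv (p v) (sub_eq_zero.1 h).symm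
    obtain ⟨q, hqu⟩ := SeparatingDual.exists_ne_zero (R := 𝕜) hu
    refine ⟨q - q w • p, fun h ↦ hqu ?_, by simp [hpw]⟩
    simpa [hpw] using DFunLike.congr_fun h (v - p v • w)

section RCLike

variable {𝕜 E : Type*} [RCLike 𝕜] [NormedAddCommGroup E] [NormedSpace 𝕜 E]

theorem eq_of_hasFDerivAt_apply_sub_eq_zero [NormedSpace ℝ E] {F : Type*} [NormedAddCommGroup F]
    [NormedSpace 𝕜 F] {φ : E → F} {φ' : E → E →L[𝕜] F} {x y : E}
    (hφ : ∀ z ∈ segment ℝ x y, HasFDerivAt φ (φ' z) z)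
    (hφ' : ∀ z ∈ segment ℝ x y, φ' z (y - x) = 0) : φ x = φ y := by
  let : NormedSpace ℝ F := .restrictScalars ℝ 𝕜 F
  have hline : ∀ t ∈ Set.Icc (0 : ℝ) 1,
      HasDerivWithinAt (φ ∘ AffineMap.lineMap x y) 0 (Set.Icc 0 1) t := fun t ht ↦ by
    have hz : AffineMap.lineMap x y t ∈ segment ℝ x y :=
      segment_eq_image_lineMap ℝ x y ▸ Set.mem_image_of_mem _ ht
    simpa [hφ' _ hz] using (((hφ _ hz).restrictScalars ℝ).comp_hasDerivAt t
      AffineMap.hasDerivAt_lineMap).hasDerivWithinAt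
  have hnorm := norm_image_sub_le_of_norm_deriv_le_segment_01' hline fun _ _ ↦ norm_zero.le
  simpa [sub_eq_zero, eq_comm] using hnorm

/-- `P` is a position vector field on `s` with factor `f`, in the flat space `E`: the covariant
derivative is the Fréchet derivative, so `∇_X P = f X` reads `DP(z) = f z • id`. Differentiability
of `P` on `s` is part of the notion. -/
def IsPositionVectorFieldOn (P : E → E) (f : E → 𝕜) (s : Set E) : Prop :=
  ∀ z ∈ s, HasFDerivAt P (f z • ContinuousLinearMap.id 𝕜 E) z

namespace IsPositionVectorFieldOn

variable {P : E → E} {f : E → 𝕜} {s : Set E}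

theorem mono {t : Set E} (hP : IsPositionVectorFieldOn P f s) (hts : t ⊆ s) :
    IsPositionVectorFieldOn P f t :=
  fun z hz ↦ hP z (hts hz)

theorem hasFDerivAt_strongDual_comp (hP : IsPositionVectorFieldOn P f s) (g : StrongDual 𝕜 E)
    {z : E} (hz : z ∈ s) : HasFDerivAt (g ∘ P) (f z • g) z := by
  simpa using g.hasFDerivAt.comp z (hP z hz)

theorem factor_eq_of_convex [NormedSpace ℝ E] (hP : IsPositionVectorFieldOn P f s)
    (hE : 1 < Module.rank 𝕜 E) (hs : IsOpen s) (hconv : Convex ℝ s) {x y : E} (hx : x ∈ s)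
    (hy : y ∈ s) : f x = f y := by
  obtain ⟨g, hg, hgw⟩ := exists_strongDual_ne_zero_apply_eq_zero hE (y - x)
  have hinv : ∀ z ∈ s, z + (y - x) ∈ s → (g ∘ P) z = (g ∘ P) (z + (y - x)) := fun z hz hzw ↦
    have hseg := hconv.segment_subset hz hzw
    eq_of_hasFDerivAt_apply_sub_eq_zero
      (fun u hu ↦ hP.hasFDerivAt_strongDual_comp g (hseg hu)) (fun u _ ↦ by simp [hgw])
  have hmem : ∀ᶠ z in 𝓝 x, z + (y - x) ∈ s :=
    (continuous_add_const (y - x)).continuousAt.eventually_mem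
      (hs.mem_nhds (by rwa [add_sub_cancel]))
  have hx' : HasFDerivAt (g ∘ P) (f y • g) x := by
    have htrans : HasFDerivAt (fun z ↦ (g ∘ P) (z + (y - x))) (f y • g) x :=
      (hasFDerivAt_comp_add_right (y - x)).2
        (by simpa using hP.hasFDerivAt_strongDual_comp g hy)
    refine htrans.congr_of_eventuallyEq ?_
    filter_upwards [hs.mem_nhds hx, hmem] with z hz hzw using hinv z hz hzw
  exact smul_left_injective 𝕜 hg ((hP.hasFDerivAt_strongDual_comp g hx).unique hx')

theorem factor_eventuallyEq (hP : IsPositionVectorFieldOn P f s) (hE : 1 < Module.rank 𝕜 E)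
    (hs : IsOpen s) {x : E} (hx : x ∈ s) : f =ᶠ[𝓝 x] fun _ ↦ f x := by
  let : NormedSpace ℝ E := .restrictScalars ℝ 𝕜 E
  obtain ⟨r, hr, hball⟩ := Metric.isOpen_iff.1 hs x hx
  filter_upwards [Metric.ball_mem_nhds x hr] with y hy
  exact (hP.mono hball).factor_eq_of_convex hE Metric.isOpen_ball (convex_ball x r) hy
    (Metric.mem_ball_self hr)

theorem exists_factor_eq (hP : IsPositionVectorFieldOn P f s) (hE : 1 < Module.rank 𝕜 E)
    (hs : IsOpen s) (hconn : IsPreconnected s) : ∃ c, ∀ x ∈ s, f x = c := by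
  let : NormedSpace ℝ E := .restrictScalars ℝ 𝕜 E
  have hf : ∀ x ∈ s, HasFDerivAt f (0 : E →L[𝕜] 𝕜) x := fun x hx ↦
    (hasFDerivAt_const (f x) x).congr_of_eventuallyEq (hP.factor_eventuallyEq hE hs hx)
  exact hs.exists_is_const_of_fderiv_eq_zero hconn
    (fun x hx ↦ (hf x hx).differentiableAt.differentiableWithinAt) (fun x hx ↦ (hf x hx).fderiv)

theorem exists_eq_smul_add {c : 𝕜} (hP : IsPositionVectorFieldOn P (fun _ ↦ c) s) (hs : IsOpen s)
    (hconn : IsPreconnected s) : ∃ b, ∀ x ∈ s, P x = c • x + b := by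
  let : NormedSpace ℝ E := .restrictScalars ℝ 𝕜 E
  have hlin (x : E) : HasFDerivAt (c • · : E → E) (c • ContinuousLinearMap.id 𝕜 E) x :=
    (hasFDerivAt_id x).const_smul c
  exact hs.exists_eq_add_of_fderiv_eq hconn
    (fun x hx ↦ (hP x hx).differentiableAt.differentiableWithinAt)
    (fun x _ ↦ (hlin x).differentiableAt.differentiableWithinAt)
    (fun x hx ↦ (hP x hx).fderiv.trans (hlin x).fderiv.symm)

end IsPositionVectorFieldOn

theorem position_vector_field_flat_general (hE : 1 < Module.rank 𝕜 E) {U : Set E} (hU : IsOpen U)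
    (hUconn : IsPreconnected U) {P : E → E} {f : E → 𝕜} (hP : IsPositionVectorFieldOn P f U) :
    ∃ (c : 𝕜) (b : E), ∀ x ∈ U, f x = c ∧ P x = c • x + b := by
  obtain ⟨c, hc⟩ := hP.exists_factor_eq hE hU hUconn
  have hPc : IsPositionVectorFieldOn P (fun _ ↦ c) U := fun x hx ↦ hc x hx ▸ hP x hx
  obtain ⟨b, hb⟩ := hPc.exists_eq_smul_add hU hUconn
  exact ⟨c, b, fun x hx ↦ ⟨hc x hx, hb x hx⟩⟩

end RCLike

/-- A position vector field in flat space of dimension at least 2 is affine: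
if `P` is `C²` on an open connected set `U` with `DP(x) = f(x) • id` on `U`,
then `f` is a constant `c` on `U` and `P x = c • x + b` there. -/
theorem position_vector_field_flat
    (E : Type*) [NormedAddCommGroup E] [NormedSpace ℝ E]
    (hdim : 2 ≤ Module.rank ℝ E)
    (U : Set E) (hU : IsOpen U) (hUconn : IsConnected U)
    (P : E → E) (hP : ContDiffOn ℝ 2 P U)
    (f : E → ℝ)
    (hf : ∀ x ∈ U, fderiv ℝ P x = f x • ContinuousLinearMap.id ℝ E) :
    ∃ (c : ℝ) (b : E), ∀ x ∈ U, f x = c ∧ P x = c • x + b :=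
  position_vector_field_flat_general (Cardinal.one_lt_two.trans_le hdim) hU hUconn.isPreconnected
    fun x hx ↦ hf x hx ▸ (hP.differentiableOn two_ne_zero).hasFDerivAt (hU.mem_nhds hx)
end

section
/- Let n ≥ 2, let (N, μ) be a measure space with finite measure, let f, φ : N → ℝ be integrable functions, let a : N → (Fin n → ℝ) be a family of functions, and let H₁, H₂ ∈ ℝ be constants such that for every x ∈ N: ∑_i a_i(x) = n·H₁ and ∑_{i<j} a_i(x)·a_j(x) = (n(n−1)/2)·H₂. Assume the integral identities ∫_N (f − φ·H₁) dμ = 0 and ∫_N (f·H₁ − φ·H₂) dμ = 0 hold. If ∫_N f dμ ≠ 0, then H₁ ≠ 0, H₂ ≠ 0, ∫_N φ dμ ≠ 0, H₂ = H₁², and for every x ∈ N and all indices i, j one has a_i(x) = a_j(x) = H₁. -/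
/-!
Writing `F = ∫ f` and `P = ∫ φ`, the two Hsiung–Minkowski identities read `F = P H₁` and
`F H₁ = P H₂`. Since `F ≠ 0`, neither `P` nor `H₁` vanishes, and eliminating `F` gives `H₂ = H₁²`.
This is the equality case of Newton's inequality `H₂ ≤ H₁²`: pointwise, the squared deviation
`∑ i, (a i - H₁)²` of the principal curvatures from their mean is `n (n - 1) (H₁² - H₂)`.
-/

open MeasureTheory

section MeanCurvatures

variable {ι R : Type*}

theorem sum_sub_const_sq [CommRing R] (s : Finset ι) (b : ι → R) (c : R) :
    ∑ i ∈ s, (b i - c) ^ 2 = ∑ i ∈ s, b i ^ 2 - 2 * c * ∑ i ∈ s, b i + s.card * c ^ 2 := by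
  simp only [sub_sq', Finset.sum_sub_distrib, Finset.sum_add_distrib, Finset.sum_const,
    nsmul_eq_mul, ← Finset.sum_mul, ← Finset.mul_sum]
  ring

variable [Fintype ι] [LinearOrder ι] [LocallyFiniteOrderTop ι] [LocallyFiniteOrderBot ι]

theorem sq_sum_eq_sum_sq_add_two_mul_sum_sum_Ioi [CommSemiring R] (b : ι → R) :
    (∑ i, b i) ^ 2 = ∑ i, b i ^ 2 + 2 * ∑ i, ∑ j ∈ Finset.Ioi i, b i * b j := by
  have off_diag : ∑ i, ∑ j ∈ {i}ᶜ, b i * b j = 2 * ∑ i, ∑ j ∈ Finset.Ioi i, b i * b j := by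
    rw [← Finset.sum_sum_Ioi_add_eq_sum_sum_off_diag fun j i ↦ b i * b j]
    simp only [two_mul, ← Finset.sum_add_distrib, mul_comm]
  calc (∑ i, b i) ^ 2 = ∑ i, ∑ j, b i * b j := by rw [sq, Finset.sum_mul_sum]
    _ = ∑ i, (b i ^ 2 + ∑ j ∈ {i}ᶜ, b i * b j) :=
      Finset.sum_congr rfl fun i _ ↦ by rw [Fintype.sum_eq_add_sum_compl i, sq]
    _ = ∑ i, b i ^ 2 + 2 * ∑ i, ∑ j ∈ Finset.Ioi i, b i * b j := by
      rw [Finset.sum_add_distrib, off_diag]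

theorem sum_sub_mean_sq_eq_card_mul_sq_sub [CommRing R] {b : ι → R} {h₁ h₂ : R}
    (hb₁ : ∑ i, b i = Fintype.card ι * h₁)
    (hb₂ : 2 * ∑ i, ∑ j ∈ Finset.Ioi i, b i * b j =
      Fintype.card ι * (Fintype.card ι - 1) * h₂) :
    ∑ i, (b i - h₁) ^ 2 = Fintype.card ι * (Fintype.card ι - 1) * (h₁ ^ 2 - h₂) := by
  have sum_sq := sq_sum_eq_sum_sq_add_two_mul_sum_sum_Ioi b
  rw [hb₁, hb₂] at sum_sq
  rw [sum_sub_const_sq, hb₁, Finset.card_univ]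
  linear_combination -sum_sq

theorem eq_mean_of_two_mul_sum_sum_Ioi_eq [CommRing R] [LinearOrder R] [IsStrictOrderedRing R]
    {b : ι → R} {h : R} (hb₁ : ∑ i, b i = Fintype.card ι * h)
    (hb₂ : 2 * ∑ i, ∑ j ∈ Finset.Ioi i, b i * b j =
      Fintype.card ι * (Fintype.card ι - 1) * h ^ 2) (i : ι) :
    b i = h := by
  have deviation : ∑ i, (b i - h) ^ 2 = 0 := by
    rw [sum_sub_mean_sq_eq_card_mul_sq_sub hb₁ hb₂, sub_self, mul_zero]
  rw [Fintype.sum_eq_zero_iff_of_nonneg fun i ↦ sq_nonneg (b i - h)] at deviation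
  exact sub_eq_zero.mp (sq_eq_zero_iff.mp (congrFun deviation i))

end MeanCurvatures

theorem ne_zero_and_eq_sq_of_eq_mul {M₀ : Type*} [CommMonoidWithZero M₀] [IsCancelMulZero M₀]
    {F P h₁ h₂ : M₀} (hF : F ≠ 0) (hFP : F = P * h₁) (hFh : F * h₁ = P * h₂) :
    h₁ ≠ 0 ∧ P ≠ 0 ∧ h₂ = h₁ ^ 2 := by
  obtain ⟨hP, hh₁⟩ := mul_ne_zero_iff.mp (hFP ▸ hF)
  refine ⟨hh₁, hP, mul_left_cancel₀ hP ?_⟩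
  rw [← hFh, hFP, mul_assoc, sq]

theorem integral_eq_integral_mul_of_integral_sub_mul_const_eq_zero {α 𝕜 : Type*} [RCLike 𝕜]
    [MeasurableSpace α] {μ : Measure α} {f g : α → 𝕜} {c : 𝕜} (hf : Integrable f μ)
    (hg : Integrable g μ) (h : ∫ x, (f x - g x * c) ∂μ = 0) :
    ∫ x, f x ∂μ = (∫ x, g x ∂μ) * c := by
  rwa [integral_sub hf (hg.mul_const c), integral_mul_const, sub_eq_zero] at h

theorem umbilic_of_integral_f_ne_zero_general {ι N : Type*} [Fintype ι] [LinearOrder ι]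
    [LocallyFiniteOrderTop ι] [LocallyFiniteOrderBot ι] [MeasurableSpace N] {μ : Measure N}
    {f φ : N → ℝ} (hf : Integrable f μ) (hφ : Integrable φ μ) {a : N → ι → ℝ} {H₁ H₂ : ℝ}
    (ha₁ : ∀ x, ∑ i, a x i = Fintype.card ι * H₁)
    (ha₂ : ∀ x, ∑ i, ∑ j ∈ Finset.Ioi i, a x i * a x j =
      ((Fintype.card ι : ℝ) * ((Fintype.card ι : ℝ) - 1) / 2) * H₂)
    (hHM₁ : ∫ x, (f x - φ x * H₁) ∂μ = 0) (hHM₂ : ∫ x, (f x * H₁ - φ x * H₂) ∂μ = 0)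
    (hfint : ∫ x, f x ∂μ ≠ 0) :
    H₁ ≠ 0 ∧ H₂ ≠ 0 ∧ (∫ x, φ x ∂μ) ≠ 0 ∧ H₂ = H₁ ^ 2 ∧ ∀ x i, a x i = H₁ := by
  have minkowski₁ := integral_eq_integral_mul_of_integral_sub_mul_const_eq_zero hf hφ hHM₁
  have minkowski₂ :=
    integral_eq_integral_mul_of_integral_sub_mul_const_eq_zero (hf.mul_const H₁) hφ hHM₂
  rw [integral_mul_const] at minkowski₂
  obtain ⟨hH₁, hP, rfl⟩ := ne_zero_and_eq_sq_of_eq_mul hfint minkowski₁ minkowski₂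
  exact ⟨hH₁, pow_ne_zero 2 hH₁, hP, rfl, fun x ↦
    eq_mean_of_two_mul_sum_sum_Ioi_eq (ha₁ x) (by rw [ha₂]; ring)⟩

/-- Case (ii) of the final theorem: with constant `H₁, H₂` and the first two
Hsiung–Minkowski identities, if `∫ f ≠ 0`, then `H₁ ≠ 0`, `H₂ ≠ 0`, `∫ φ ≠ 0`,
`H₂ = H₁²`, and the hypersurface is totally umbilic: all principal curvature
functions equal `H₁`. -/
theorem umbilic_of_integral_f_ne_zero
    (n : ℕ) (hn : 2 ≤ n)
    (N : Type*) [MeasurableSpace N] (μ : Measure N) [IsFiniteMeasure μ]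
    (f φ : N → ℝ) (hf : Integrable f μ) (hφ : Integrable φ μ)
    (a : N → Fin n → ℝ) (H₁ H₂ : ℝ)
    (ha1 : ∀ x, ∑ i, a x i = n * H₁)
    (ha2 : ∀ x, ∑ i, ∑ j ∈ Finset.Ioi i, a x i * a x j = ((n : ℝ) * ((n : ℝ) - 1) / 2) * H₂)
    (hHM1 : ∫ x, (f x - φ x * H₁) ∂μ = 0)
    (hHM2 : ∫ x, (f x * H₁ - φ x * H₂) ∂μ = 0)
    (hfint : ∫ x, f x ∂μ ≠ 0) :
    H₁ ≠ 0 ∧ H₂ ≠ 0 ∧ (∫ x, φ x ∂μ) ≠ 0 ∧ H₂ = H₁ ^ 2 ∧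
      ∀ x, ∀ i j, a x i = H₁ ∧ a x j = H₁ := by
  obtain ⟨hH₁, hH₂, hP, hH, umbilic⟩ := umbilic_of_integral_f_ne_zero_general hf hφ
    (a := a) (by simpa using ha1) (by simpa using ha2) hHM1 hHM2 hfint
  exact ⟨hH₁, hH₂, hP, hH, fun x i j ↦ ⟨umbilic x i, umbilic x j⟩⟩
end
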